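/- Assume in addition that κ₁(s) = 0 for all s ∈ I (the ruled surface is developable). Then for every s ∈ I with τ₁(s) ≠ 0 and every t ∈ ℝ: F(s,t) = σ(s) + ((t + ⟪r'(s), e'(s)⟫)/τ₁(s))·σ'(s). In other words, the developable surface is reparametrized as the tangent developable of its striction curve σ. -/

import Mathlib

noncomputable section
open scoped RealInnerProductSpace

/-- Euclidean 3-space `ℝ³`. -/
abbrev E3 : Type := EuclideanSpace ℝ (Fin 3)

/-- The cross product on `E3`. -/
def cross (u v : E3) : E3 :=
  (WithLp.equiv 2 (Fin 3 → ℝ)).symm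
    ![u 1 * v 2 - u 2 * v 1, u 2 * v 0 - u 0 * v 2, u 0 * v 1 - u 1 * v 0]

/-- Determinant of the 3×3 matrix with columns `u`, `v`, `w`. -/
def det3 (u v w : E3) : ℝ :=
  Matrix.det !![u 0, v 0, w 0; u 1, v 1, w 1; u 2, v 2, w 2]

namespace Ruled

/-- The director curve `e = v₀`. -/
def e (v₀ : ℝ → E3) : ℝ → E3 := v₀

/-- The base curve `r = v₀ × v₁`. -/
def r (v₀ v₁ : ℝ → E3) : ℝ → E3 := fun s => cross (v₀ s) (v₁ s)

/-- The parametrization `F(s,t) = r(s) + t • e(s)` of the ruled surface. -/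
def F (v₀ v₁ : ℝ → E3) (s t : ℝ) : E3 := r v₀ v₁ s + t • v₀ s

/-- `n₀ = v₀'`. -/
def n₀ (v₀ : ℝ → E3) : ℝ → E3 := fun s => deriv v₀ s

/-- `κ₁ = ⟪v₀', v₁'⟫`, the ε-part of the dual curvature. -/
def κ₁ (v₀ v₁ : ℝ → E3) : ℝ → ℝ := fun s => ⟪deriv v₀ s, deriv v₁ s⟫

/-- `n₁ = v₁' - κ₁ • v₀'`. -/
def n₁ (v₀ v₁ : ℝ → E3) : ℝ → E3 := fun s => deriv v₁ s - κ₁ v₀ v₁ s • deriv v₀ s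

/-- `t₀ = v₀ × n₀`. -/
def t₀ (v₀ : ℝ → E3) : ℝ → E3 := fun s => cross (v₀ s) (n₀ v₀ s)

/-- `t₁ = v₀ × n₁ + v₁ × n₀`. -/
def t₁ (v₀ v₁ : ℝ → E3) : ℝ → E3 :=
  fun s => cross (v₀ s) (n₁ v₀ v₁ s) + cross (v₁ s) (n₀ v₀ s)

/-- `τ₀ = ⟪n₀', t₀⟫`, the real part of the dual torsion. -/
def τ₀ (v₀ : ℝ → E3) : ℝ → ℝ := fun s => ⟪deriv (n₀ v₀) s, t₀ v₀ s⟫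

/-- `τ₁ = ⟪n₀', t₁⟫ + ⟪n₁', t₀⟫`, the ε-part of the dual torsion. -/
def τ₁ (v₀ v₁ : ℝ → E3) : ℝ → ℝ :=
  fun s => ⟪deriv (n₀ v₀) s, t₁ v₀ v₁ s⟫ + ⟪deriv (n₁ v₀ v₁) s, t₀ v₀ s⟫

/-- The striction curve `σ(s) = r(s) - ⟪r'(s), e'(s)⟫ • e(s)`. -/
def strict (v₀ v₁ : ℝ → E3) : ℝ → E3 :=
  fun s => r v₀ v₁ s - ⟪deriv (r v₀ v₁) s, deriv (e v₀) s⟫ • e v₀ s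

end Ruled

open Ruled

/-!
Along an arc-length parametrized curve `v₀` on the unit sphere, `v₀`, `v₀'`, `t₀ = v₀ × v₀'` is an
orthonormal frame. Write `l = ⟪r', e'⟫`. Expanding the two summands of
`r' = v₀ × v₁' + v₀' × v₁` in this frame gives `v₀ × v₁' = l v₀' + κ₁ t₀`, while `v₀' × v₁` is a
multiple of `v₀`. Hence subtracting `(l v₀)' = l' v₀ + l v₀'` cancels the `v₀'`-component, and the
remaining coefficient of `v₀` is `τ₁`, so that `σ' = κ₁ t₀ + τ₁ v₀` on every ruled surface. Where
`κ₁` vanishes, `v₀ = σ' / τ₁`, which is substituted into `F = σ + (t + l) v₀`.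
-/

open scoped Matrix Topology

section Cross

/-- The cross product of `E3` as a continuous bilinear map, giving access to the library's
linearity and differentiation lemmas. -/
def crossCLM : E3 →L[ℝ] E3 →L[ℝ] E3 :=
  LinearMap.toContinuousBilinearMap <|
    (crossProduct.compl₁₂ (WithLp.linearEquiv 2 ℝ (Fin 3 → ℝ)).toLinearMap
      (WithLp.linearEquiv 2 ℝ (Fin 3 → ℝ)).toLinearMap).compr₂
        (WithLp.linearEquiv 2 ℝ (Fin 3 → ℝ)).symm.toLinearMap

theorem cross_eq_crossCLM (u v : E3) : cross u v = crossCLM u v := rfl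

theorem ofLp_cross (u v : E3) : (cross u v).ofLp = u.ofLp ⨯₃ v.ofLp := rfl

theorem real_inner_eq_dotProduct (u v : E3) : ⟪u, v⟫ = u.ofLp ⬝ᵥ v.ofLp := by
  rw [EuclideanSpace.inner_eq_star_dotProduct, star_trivial, dotProduct_comm]

theorem inner_self_cross (u v : E3) : ⟪u, cross u v⟫ = 0 := by
  rw [real_inner_eq_dotProduct, ofLp_cross, dot_self_cross]

theorem inner_cross_self (u v : E3) : ⟪v, cross u v⟫ = 0 := by
  rw [real_inner_eq_dotProduct, ofLp_cross, dot_cross_self]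

theorem inner_cross_cyclic (u v w : E3) : ⟪u, cross v w⟫ = ⟪v, cross w u⟫ := by
  simp only [real_inner_eq_dotProduct, ofLp_cross]
  exact triple_product_permutation _ _ _

theorem inner_cross_cross (u v w x : E3) :
    ⟪cross u v, cross w x⟫ = ⟪u, w⟫ * ⟪v, x⟫ - ⟪u, x⟫ * ⟪v, w⟫ := by
  simp only [real_inner_eq_dotProduct, ofLp_cross]
  exact cross_dot_cross _ _ _ _

theorem neg_cross_eq_cross_swap (u v : E3) : -cross u v = cross v u :=
  congrArg (WithLp.toLp 2) (cross_anticomm u.ofLp v.ofLp)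

theorem hasDerivAt_cross {f g : ℝ → E3} {f' g' : E3} {s : ℝ} (hf : HasDerivAt f f' s)
    (hg : HasDerivAt g g' s) :
    HasDerivAt (fun a => cross (f a) (g a)) (cross (f s) g' + cross f' (g s)) s :=
  crossCLM.hasDerivAt_of_bilinear (fun _ => hf) (fun _ => hg)

theorem orthonormal_cross {x p : E3} (hx : ‖x‖ = 1) (hp : ‖p‖ = 1) (hxp : ⟪x, p⟫ = 0) :
    Orthonormal ℝ ![x, p, cross x p] := by
  have hcross : ‖cross x p‖ = 1 := by
    rw [← pow_eq_one_iff_of_nonneg (norm_nonneg _) two_ne_zero, ← real_inner_self_eq_norm_sq,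
      inner_cross_cross]
    simp [hx, hp, hxp]
  rw [orthonormal_iff_ite]
  intro i j
  fin_cases i <;> fin_cases j <;>
    simp [hx, hp, hxp, hcross, real_inner_comm x p, inner_self_cross, inner_cross_self,
      real_inner_comm _ (cross x p)]

theorem eq_frame_expansion {x p : E3} (hx : ‖x‖ = 1) (hp : ‖p‖ = 1) (hxp : ⟪x, p⟫ = 0) (z : E3) :
    z = ⟪x, z⟫ • x + ⟪p, z⟫ • p + ⟪cross x p, z⟫ • cross x p := by
  have hframe := orthonormal_cross hx hp hxp
  have hspan := hframe.linearIndependent.span_eq_top_of_card_eq_finrank (by simp)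
  simpa [Fin.sum_univ_three] using
    ((OrthonormalBasis.mk hframe hspan.ge).sum_repr' z).symm

theorem cross_left_eq_frame_expansion {x p : E3} (hx : ‖x‖ = 1) (hp : ‖p‖ = 1) (hxp : ⟪x, p⟫ = 0)
    (u : E3) : cross x u = ⟪p, cross x u⟫ • p + ⟪p, u⟫ • cross x p := by
  have hcross : ⟪cross x p, cross x u⟫ = ⟪p, u⟫ := by
    simp [inner_cross_cross, hx, hxp, real_inner_comm]
  simpa [hcross, inner_self_cross] using eq_frame_expansion hx hp hxp (cross x u)

theorem cross_eq_smul_of_inner_eq_zero {x p y : E3} (hx : ‖x‖ = 1) (hp : ‖p‖ = 1)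
    (hxp : ⟪x, p⟫ = 0) (hxy : ⟪x, y⟫ = 0) : cross p y = ⟪x, cross p y⟫ • x := by
  have hcross : ⟪cross x p, cross p y⟫ = 0 := by
    simp [inner_cross_cross, hxp, hxy]
  simpa [hcross, inner_self_cross] using eq_frame_expansion hx hp hxp (cross p y)

end Cross

section ContDiff

variable {𝕜 V : Type*} [NontriviallyNormedField 𝕜] [NormedAddCommGroup V] [NormedSpace 𝕜 V]
  {f : 𝕜 → V} {s : 𝕜}

theorem differentiableAt_deriv_of_contDiffAt_two (hf : ContDiffAt 𝕜 2 f s) :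
    DifferentiableAt 𝕜 (deriv f) s :=
  (hf.derivWithin (m := 1) (by norm_num)).differentiableAt one_ne_zero

theorem eventually_differentiableAt_of_contDiffAt_two (hf : ContDiffAt 𝕜 2 f s) :
    ∀ᶠ a in 𝓝 s, DifferentiableAt 𝕜 f a :=
  (hf.eventually (by simp)).mono fun _ ha => ha.differentiableAt two_ne_zero

end ContDiff

section SphericalCurve

variable {V : Type*} [NormedAddCommGroup V] [InnerProductSpace ℝ V] {f : ℝ → V} {s : ℝ}

theorem inner_deriv_eq_zero_of_eventually_norm_eq {c : ℝ} (hf : DifferentiableAt ℝ f s)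
    (hc : ∀ᶠ a in 𝓝 s, ‖f a‖ = c) : ⟪f s, deriv f s⟫ = 0 := by
  have hconst : (fun a => ‖f a‖ ^ 2) =ᶠ[𝓝 s] fun _ => c ^ 2 := hc.mono fun a ha => by simp [ha]
  have hderiv := hf.hasDerivAt.norm_sq.deriv
  rw [hconst.deriv_eq, deriv_const] at hderiv
  linarith

/-- The curve `f` is, near `s`, a `C²` curve on the unit sphere parametrized by arc length. -/
structure IsUnitSpeedSphericalAt (f : ℝ → V) (s : ℝ) : Prop where
  contDiffAt : ContDiffAt ℝ 2 f s
  norm_eq_one : ∀ᶠ a in 𝓝 s, ‖f a‖ = 1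
  norm_deriv_eq_one : ∀ᶠ a in 𝓝 s, ‖deriv f a‖ = 1

namespace IsUnitSpeedSphericalAt

theorem of_isOpen {I : Set ℝ} (hI : IsOpen I) (hf : ContDiffOn ℝ 2 f I)
    (hunit : ∀ a ∈ I, ‖f a‖ = 1) (harc : ∀ a ∈ I, ‖deriv f a‖ = 1) (hs : s ∈ I) :
    IsUnitSpeedSphericalAt f s where
  contDiffAt := hf.contDiffAt (hI.mem_nhds hs)
  norm_eq_one := Filter.eventually_of_mem (hI.mem_nhds hs) hunit
  norm_deriv_eq_one := Filter.eventually_of_mem (hI.mem_nhds hs) harc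

theorem differentiableAt (h : IsUnitSpeedSphericalAt f s) : DifferentiableAt ℝ f s :=
  h.contDiffAt.differentiableAt two_ne_zero

theorem differentiableAt_deriv (h : IsUnitSpeedSphericalAt f s) : DifferentiableAt ℝ (deriv f) s :=
  differentiableAt_deriv_of_contDiffAt_two h.contDiffAt

theorem eventually_inner_deriv (h : IsUnitSpeedSphericalAt f s) :
    ∀ᶠ a in 𝓝 s, ⟪f a, deriv f a⟫ = 0 := by
  filter_upwards [eventually_differentiableAt_of_contDiffAt_two h.contDiffAt,
    h.norm_eq_one.eventually_nhds] with a hdiff hnorm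
  exact inner_deriv_eq_zero_of_eventually_norm_eq hdiff hnorm

theorem inner_deriv_deriv (h : IsUnitSpeedSphericalAt f s) : ⟪f s, deriv (deriv f) s⟫ = -1 := by
  have hderiv :=
    (h.differentiableAt.hasDerivAt.inner ℝ h.differentiableAt_deriv.hasDerivAt).deriv
  rw [Filter.EventuallyEq.deriv_eq h.eventually_inner_deriv, deriv_const,
    real_inner_self_eq_norm_sq, h.norm_deriv_eq_one.self_of_nhds] at hderiv
  linarith

theorem inner_deriv_deriv_deriv (h : IsUnitSpeedSphericalAt f s) :
    ⟪deriv f s, deriv (deriv f) s⟫ = 0 :=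
  inner_deriv_eq_zero_of_eventually_norm_eq h.differentiableAt_deriv h.norm_deriv_eq_one

end IsUnitSpeedSphericalAt

end SphericalCurve

namespace Ruled

variable {v₀ v₁ : ℝ → E3} {s : ℝ}

/-- The coefficient `⟪r', e'⟫` for which `strict = r - strictionCoeff • e`. -/
def strictionCoeff (v₀ v₁ : ℝ → E3) (s : ℝ) : ℝ := ⟪deriv (r v₀ v₁) s, deriv (e v₀) s⟫

theorem n₀_eq_deriv (v₀ : ℝ → E3) : n₀ v₀ = deriv v₀ := rfl

theorem F_eq_strict_add (v₀ v₁ : ℝ → E3) (s t : ℝ) :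
    F v₀ v₁ s t = strict v₀ v₁ s + (t + strictionCoeff v₀ v₁ s) • v₀ s := by
  simp only [F, strict, strictionCoeff, e]
  module

theorem hasDerivAt_r (hv₀ : DifferentiableAt ℝ v₀ s) (hv₁ : DifferentiableAt ℝ v₁ s) :
    HasDerivAt (r v₀ v₁) (cross (v₀ s) (deriv v₁ s) + cross (deriv v₀ s) (v₁ s)) s :=
  hasDerivAt_cross hv₀.hasDerivAt hv₁.hasDerivAt

theorem strictionCoeff_eq_inner_cross (hv₀ : DifferentiableAt ℝ v₀ s)
    (hv₁ : DifferentiableAt ℝ v₁ s) :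
    strictionCoeff v₀ v₁ s = ⟪cross (v₀ s) (deriv v₁ s), deriv v₀ s⟫ := by
  rw [strictionCoeff, (hasDerivAt_r hv₀ hv₁).deriv, e, inner_add_left,
    real_inner_comm _ (cross (deriv v₀ s) _), inner_self_cross, add_zero]

theorem cross_v₀_deriv_v₁ (hv₀ : IsUnitSpeedSphericalAt v₀ s) (hv₁ : DifferentiableAt ℝ v₁ s) :
    cross (v₀ s) (deriv v₁ s) =
      strictionCoeff v₀ v₁ s • deriv v₀ s + κ₁ v₀ v₁ s • t₀ v₀ s := by
  rw [strictionCoeff_eq_inner_cross hv₀.differentiableAt hv₁, real_inner_comm]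
  exact cross_left_eq_frame_expansion hv₀.norm_eq_one.self_of_nhds
    hv₀.norm_deriv_eq_one.self_of_nhds hv₀.eventually_inner_deriv.self_of_nhds _

theorem cross_deriv_v₀_v₁ (hv₀ : IsUnitSpeedSphericalAt v₀ s) (horth : ⟪v₀ s, v₁ s⟫ = 0) :
    cross (deriv v₀ s) (v₁ s) = ⟪v₀ s, cross (deriv v₀ s) (v₁ s)⟫ • v₀ s :=
  cross_eq_smul_of_inner_eq_zero hv₀.norm_eq_one.self_of_nhds
    hv₀.norm_deriv_eq_one.self_of_nhds hv₀.eventually_inner_deriv.self_of_nhds horth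

theorem hasDerivAt_strictionCoeff (hv₀ : IsUnitSpeedSphericalAt v₀ s) (hv₁ : ContDiffAt ℝ 2 v₁ s) :
    HasDerivAt (strictionCoeff v₀ v₁)
      (κ₁ v₀ v₁ s * τ₀ v₀ s - ⟪deriv (deriv v₁) s, t₀ v₀ s⟫) s := by
  have hv₁' := (differentiableAt_deriv_of_contDiffAt_two hv₁).hasDerivAt
  have hformula : strictionCoeff v₀ v₁ =ᶠ[𝓝 s]
      fun a => ⟪cross (v₀ a) (deriv v₁ a), deriv v₀ a⟫ := by
    filter_upwards [eventually_differentiableAt_of_contDiffAt_two hv₀.contDiffAt,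
      eventually_differentiableAt_of_contDiffAt_two hv₁] with a h₀ h₁
    exact strictionCoeff_eq_inner_cross h₀ h₁
  have htorsion : ⟪cross (v₀ s) (deriv v₁ s), deriv (deriv v₀) s⟫ = κ₁ v₀ v₁ s * τ₀ v₀ s := by
    rw [cross_v₀_deriv_v₁ hv₀ (hv₁.differentiableAt two_ne_zero), inner_add_left,
      real_inner_smul_left, real_inner_smul_left, hv₀.inner_deriv_deriv_deriv, mul_zero, zero_add,
      real_inner_comm, τ₀, n₀_eq_deriv]
  have htriple : ⟪cross (v₀ s) (deriv (deriv v₁) s), deriv v₀ s⟫ =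
      -⟪deriv (deriv v₁) s, t₀ v₀ s⟫ := by
    rw [real_inner_comm, inner_cross_cyclic, inner_cross_cyclic,
      ← neg_cross_eq_cross_swap, inner_neg_right, t₀, n₀_eq_deriv]
  refine (((hasDerivAt_cross hv₀.differentiableAt.hasDerivAt hv₁').inner ℝ
    hv₀.differentiableAt_deriv.hasDerivAt).congr_of_eventuallyEq hformula).congr_deriv ?_
  rw [htorsion, inner_add_left, htriple, real_inner_comm _ (cross (deriv v₀ s) _),
    inner_self_cross]
  ring

theorem inner_deriv_n₁_t₀ (hv₀ : IsUnitSpeedSphericalAt v₀ s) (hv₁ : ContDiffAt ℝ 2 v₁ s) :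
    ⟪deriv (n₁ v₀ v₁) s, t₀ v₀ s⟫ =
      ⟪deriv (deriv v₁) s, t₀ v₀ s⟫ - κ₁ v₀ v₁ s * τ₀ v₀ s := by
  have hv₀' := hv₀.differentiableAt_deriv
  have hv₁' := differentiableAt_deriv_of_contDiffAt_two hv₁
  have hκ₁ : DifferentiableAt ℝ (κ₁ v₀ v₁) s := hv₀'.inner ℝ hv₁'
  have hn₁ : HasDerivAt (n₁ v₀ v₁) _ s := hv₁'.hasDerivAt.sub (hκ₁.hasDerivAt.smul hv₀'.hasDerivAt)
  have ht₀ : ⟪deriv v₀ s, t₀ v₀ s⟫ = 0 := inner_cross_self _ _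
  rw [hn₁.deriv, inner_sub_left, inner_add_left, real_inner_smul_left, real_inner_smul_left, ht₀,
    mul_zero, add_zero, τ₀, n₀_eq_deriv]

theorem τ₁_eq_sub_deriv_strictionCoeff (hv₀ : IsUnitSpeedSphericalAt v₀ s)
    (hv₁ : ContDiffAt ℝ 2 v₁ s) (horth : ⟪v₀ s, v₁ s⟫ = 0) :
    τ₁ v₀ v₁ s = ⟪v₀ s, cross (deriv v₀ s) (v₁ s)⟫ - deriv (strictionCoeff v₀ v₁) s := by
  have hn₁ : cross (v₀ s) (n₁ v₀ v₁ s) = strictionCoeff v₀ v₁ s • deriv v₀ s := by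
    rw [n₁, cross_eq_crossCLM, map_sub, map_smul, ← cross_eq_crossCLM, ← cross_eq_crossCLM,
      cross_v₀_deriv_v₁ hv₀ (hv₁.differentiableAt two_ne_zero), t₀, n₀_eq_deriv,
      add_sub_cancel_right]
  have hv₁n₀ : ⟪deriv (deriv v₀) s, cross (v₁ s) (deriv v₀ s)⟫ =
      ⟪v₀ s, cross (deriv v₀ s) (v₁ s)⟫ :=
    calc ⟪deriv (deriv v₀) s, cross (v₁ s) (deriv v₀ s)⟫
      _ = -⟪deriv (deriv v₀) s, cross (deriv v₀ s) (v₁ s)⟫ := by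
        rw [← neg_cross_eq_cross_swap, inner_neg_right]
      _ = -(⟪v₀ s, cross (deriv v₀ s) (v₁ s)⟫ * ⟪deriv (deriv v₀) s, v₀ s⟫) := by
        rw [← real_inner_smul_right, ← cross_deriv_v₀_v₁ hv₀ horth]
      _ = ⟪v₀ s, cross (deriv v₀ s) (v₁ s)⟫ := by
        rw [real_inner_comm (v₀ s), hv₀.inner_deriv_deriv, mul_neg_one, neg_neg]
  have ht₁ : ⟪deriv (deriv v₀) s, t₁ v₀ v₁ s⟫ = ⟪v₀ s, cross (deriv v₀ s) (v₁ s)⟫ := by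
    rw [t₁, hn₁, n₀_eq_deriv, inner_add_right, hv₁n₀, real_inner_smul_right, real_inner_comm,
      hv₀.inner_deriv_deriv_deriv, mul_zero, zero_add]
  rw [τ₁, inner_deriv_n₁_t₀ hv₀ hv₁, (hasDerivAt_strictionCoeff hv₀ hv₁).deriv, n₀_eq_deriv, ht₁]
  ring

theorem deriv_strict (hv₀ : IsUnitSpeedSphericalAt v₀ s) (hv₁ : ContDiffAt ℝ 2 v₁ s)
    (horth : ⟪v₀ s, v₁ s⟫ = 0) :
    deriv (strict v₀ v₁) s = κ₁ v₀ v₁ s • t₀ v₀ s + τ₁ v₀ v₁ s • v₀ s := by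
  have hv₁' := hv₁.differentiableAt two_ne_zero
  have hcoeff := (hasDerivAt_strictionCoeff hv₀ hv₁).differentiableAt.hasDerivAt
  have hstrict : HasDerivAt (strict v₀ v₁) _ s :=
    (hasDerivAt_r hv₀.differentiableAt hv₁').sub (hcoeff.smul hv₀.differentiableAt.hasDerivAt)
  rw [hstrict.deriv, cross_v₀_deriv_v₁ hv₀ hv₁', cross_deriv_v₀_v₁ hv₀ horth,
    τ₁_eq_sub_deriv_strictionCoeff hv₀ hv₁ horth, e]
  module

end Ruled

theorem developable_is_tangent_developable_general {v₀ v₁ : ℝ → E3} {s : ℝ}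
    (hv₀ : IsUnitSpeedSphericalAt v₀ s) (hv₁ : ContDiffAt ℝ 2 v₁ s) (horth : ⟪v₀ s, v₁ s⟫ = 0)
    (hdev : κ₁ v₀ v₁ s = 0) (hτ : τ₁ v₀ v₁ s ≠ 0) (t : ℝ) :
    F v₀ v₁ s t = strict v₀ v₁ s +
      ((t + ⟪deriv (r v₀ v₁) s, deriv (e v₀) s⟫) / τ₁ v₀ v₁ s) • deriv (strict v₀ v₁) s := by
  rw [deriv_strict hv₀ hv₁ horth, hdev, zero_smul, zero_add, smul_smul, div_mul_cancel₀ _ hτ,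
    F_eq_strict_add, strictionCoeff]

/-- A non-cylindrical developable surface is the tangent developable of its striction
curve: `F(s,t) = σ(s) + ((t + ⟪r'(s), e'(s)⟫)/τ₁(s)) • σ'(s)` wherever `τ₁(s) ≠ 0`. -/
theorem developable_is_tangent_developable
    (I : Set ℝ) (v₀ v₁ : ℝ → E3)
    (hI : IsOpen I) (hI' : I.OrdConnected)
    (hv₀ : ContDiffOn ℝ (⊤ : ℕ∞) v₀ I) (hv₁ : ContDiffOn ℝ (⊤ : ℕ∞) v₁ I)
    (hunit : ∀ s ∈ I, ‖v₀ s‖ = 1) (horth : ∀ s ∈ I, ⟪v₀ s, v₁ s⟫ = 0)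
    (harc : ∀ s ∈ I, ‖deriv v₀ s‖ = 1)
    (hdev : ∀ s ∈ I, κ₁ v₀ v₁ s = 0) :
    ∀ s ∈ I, τ₁ v₀ v₁ s ≠ 0 → ∀ t : ℝ,
      F v₀ v₁ s t = strict v₀ v₁ s +
        ((t + ⟪deriv (r v₀ v₁) s, deriv (e v₀) s⟫) / τ₁ v₀ v₁ s) • deriv (strict v₀ v₁) s := by
  intro s hs hτ
  have two_le : (2 : WithTop ℕ∞) ≤ (⊤ : ℕ∞) := by norm_cast
  exact developable_is_tangent_developable_general
    (.of_isOpen hI (hv₀.of_le two_le) hunit harc hs)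
    ((hv₁.contDiffAt (hI.mem_nhds hs)).of_le two_le) (horth s hs) (hdev s hs) hτ
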